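/- Fix ℓ ∈ R^d \ {0}. If P(A_+(ℓ)) > 0 then P(A_+(ℓ) ∩ {X_n·ℓ ≥ 0 for all n ≥ 0}) > 0. If in addition θ_+ = 1 and condition (★) holds, then P((A_+(ℓ) ∪ A_-(ℓ))^c) = 0. -/

import Mathlib

/-!
The argument is annealed throughout: cylinder probabilities are integrals of path weights, weights
depending on disjoint sets of sites are independent, and the environment law is shift invariant.

If the walk goes up then it attains its minimal height at some time; by the Markov property and
stationarity, the recentred walk from that time goes up without backtracking, so this event must
have positive probability (`IsRWRE.stay_pos`).

For the second claim, almost surely one of the two directional limits holds, for these reasons.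
* At each strict record the walk has a conditional chance bounded below of going up for good, so by
  Lévy's upward theorem (`levy_trigger`) a walk with heights unbounded above goes up
  (`IsRWRE.goesUp_of_unbounded`).
* Some step `e` of positive height has positive annealed probability. A walk with heights bounded
  above that visited infinitely many sites above some level would infinitely often start a half-line
  in direction `e` with no visited site on it (`frequently_fresh`), and each time it has a
  conditional chance bounded below of running along it past any given height
  (`IsRWRE.exceeds_of_fresh`). Hence a walk with bounded heights that does not tend to minus infinity
  visits only finitely many sites above each level, and some site `y` infinitely often.
* Every site reachable from such a `y` is then also visited infinitely often
  (`IsRWRE.recurrent_step`), so `M_y = C_y` is infinite, while the sites of `M_y` above any level are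
  finitely many. Thus `M_y` has a finite nonempty set of highest sites.
* The last situation has probability zero by the mass transport principle
  (`IsRWRE.no_finite_top`): letting every site of a cluster send unit mass, split equally, to the
  highest sites of that cluster would give the origin infinite mass on an event of positive
  probability, although the expected mass sent out is at most one.
-/

open MeasureTheory Filter Set Topology
open scoped Classical ENNReal

noncomputable section

/-- Lattice sites of `ℤ^d`. -/
abbrev Site (d : ℕ) := Fin d → ℤ

/-- The `2d` unit vectors `±e_i` of `ℤ^d`, indexed by `Fin d × Bool`
(`true` for `+e_i`, `false` for `-e_i`). -/
def stepVec (d : ℕ) (i : Fin d × Bool) : Site d :=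
  if i.2 = true then Pi.single i.1 1 else -Pi.single i.1 1

/-- An element of `𝒫`: a probability measure on the set `E` of unit vectors of `ℤ^d`,
recorded via its probability mass function on lattice vectors. -/
structure EnvDist (d : ℕ) where
  prob : Site d → ℝ
  nonneg : ∀ v, 0 ≤ prob v
  support : ∀ v, prob v ≠ 0 → ∃ i, v = stepVec d i
  total : ∑ i : Fin d × Bool, prob (stepVec d i) = 1

instance {d : ℕ} : MeasurableSpace (EnvDist d) :=
  MeasurableSpace.comap EnvDist.prob inferInstance

/-- Environments: an element of `𝒫` at every site. -/
abbrev EnvOmega (d : ℕ) := Site d → EnvDist d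

/-- Path space for the walk. -/
abbrev PathSpace (d : ℕ) := ℕ → Site d

/-- Sample space for the annealed walk: environment together with path. -/
abbrev RWSpace (d : ℕ) := EnvOmega d × PathSpace d

/-- Dot product of a lattice vector with a real vector. -/
def dotR {d : ℕ} (x : Site d) (l : Fin d → ℝ) : ℝ := ∑ i, (x i : ℝ) * l i

/-- Dot product of two lattice vectors. -/
def dotZ {d : ℕ} (x y : Site d) : ℤ := ∑ i, x i * y i

/-- Quenched probability that the walk follows the steps of `x` for its first `n` steps. -/
def pathWeight {d : ℕ} (ω : EnvOmega d) (n : ℕ) (x : ℕ → Site d) : ℝ :=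
  ∏ k ∈ Finset.range n, (ω (x k)).prob (x (k + 1) - x k)

/-- `ν` is the product measure `μ^{⊗ℤ^d}`, i.e. the coordinates are i.i.d. with law `μ`. -/
def IsIIDEnv {d : ℕ} (μ : Measure (EnvDist d)) (ν : Measure (EnvOmega d)) : Prop :=
  IsProbabilityMeasure μ ∧ IsProbabilityMeasure ν ∧
    ∀ (s : Finset (Site d)) (A : Site d → Set (EnvDist d)),
      (∀ x ∈ s, MeasurableSet (A x)) →
      ν {ω | ∀ x ∈ s, ω x ∈ A x} = ∏ x ∈ s, μ (A x)

/-- `P` is the annealed law of the RWRE started at the origin in an i.i.d. environment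
with marginal `μ`: the environment marginal is the i.i.d. product, and the cylinder
probabilities are given by averaging the quenched Markov-chain probabilities. -/
def IsRWRE {d : ℕ} (μ : Measure (EnvDist d)) (P : Measure (RWSpace d)) : Prop :=
  IsProbabilityMeasure P ∧ IsIIDEnv μ (P.map Prod.fst) ∧
    ∀ (n : ℕ) (x : ℕ → Site d) (A : Set (EnvOmega d)), MeasurableSet A →
      (P {q | q.1 ∈ A ∧ ∀ k ≤ n, q.2 k = x k}).toReal =
        (if x 0 = 0 then (1 : ℝ) else 0) * ∫ ω in A, pathWeight ω n x ∂(P.map Prod.fst)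

/-- `Q` is the quenched law `ℙ_ω` of the walk in the fixed environment `ω`, started at the
origin. -/
def IsQuenchedRW {d : ℕ} (ω : EnvOmega d) (Q : Measure (PathSpace d)) : Prop :=
  IsProbabilityMeasure Q ∧
    ∀ (n : ℕ) (x : ℕ → Site d),
      (Q {w | ∀ k ≤ n, w k = x k}).toReal =
        (if x 0 = 0 then (1 : ℝ) else 0) * pathWeight ω n x

/-- `x → y`: there is a directed path from `x` to `y` in the graph `G(ω)`. -/
def Reaches {d : ℕ} (ω : EnvOmega d) : Site d → Site d → Prop :=
  Relation.ReflTransGen (fun a b => 0 < (ω a).prob (b - a))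

/-- The forward cluster `C_x`. -/
def clusterC {d : ℕ} (ω : EnvOmega d) (x : Site d) : Set (Site d) := {y | Reaches ω x y}

/-- The mutually connected cluster `M_x = C_x ∩ B_x`. -/
def clusterM {d : ℕ} (ω : EnvOmega d) (x : Site d) : Set (Site d) :=
  {y | Reaches ω x y ∧ Reaches ω y x}

/-- The local drift `u = ∑_e γ(e) e` of an environment value `γ`. -/
def drift {d : ℕ} (γ : EnvDist d) : Fin d → ℝ :=
  fun i => ∑ k : Fin d × Bool, γ.prob (stepVec d k) * ((stepVec d k i : ℤ) : ℝ)

/-- `N_n`: the number of times before time `n` at which the walk sits on a site whose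
environment equals `γ`. -/
def envCount {d : ℕ} (γ : EnvDist d) (q : RWSpace d) (n : ℕ) : ℕ :=
  Set.ncard {m : ℕ | m < n ∧ q.1 (q.2 m) = γ}

end

/-! ### Cylinders, path weights and the environment law -/

/-- The set of paths that agree with `x` up to time `n`. -/
def cyl {d : ℕ} (n : ℕ) (x : PathSpace d) : Set (PathSpace d) := {w | ∀ k ≤ n, w k = x k}

/-- The quenched weight `pathWeight`, as an extended nonnegative real. -/
noncomputable def pw {d : ℕ} (n : ℕ) (x : PathSpace d) (ω : EnvOmega d) : ℝ≥0∞ :=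
  ∏ k ∈ Finset.range n, ENNReal.ofReal ((ω (x k)).prob (x (k + 1) - x k))

/-- The environment seen from `z`. -/
def shiftEnv {d : ℕ} (z : Site d) (ω : EnvOmega d) : EnvOmega d := fun x => ω (x + z)

lemma EnvDist.prob_le_one {d : ℕ} (γ : EnvDist d) (v : Site d) : γ.prob v ≤ 1 := by
  by_cases h : γ.prob v = 0
  · rw [h]; exact zero_le_one
  · obtain ⟨i, rfl⟩ := γ.support v h
    rw [← γ.total]
    exact Finset.single_le_sum (f := fun i => γ.prob (stepVec d i))
      (fun i _ => γ.nonneg _) (Finset.mem_univ i)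

lemma measurable_prob {d : ℕ} (v : Site d) : Measurable fun γ : EnvDist d => γ.prob v :=
  (measurable_pi_apply v).comp (comap_measurable EnvDist.prob)

lemma measurable_shiftEnv {d : ℕ} (z : Site d) : Measurable (shiftEnv (d := d) z) :=
  measurable_pi_lambda _ fun x => measurable_pi_apply (x + z)

lemma measurableSet_cyl {d : ℕ} (n : ℕ) (x : PathSpace d) : MeasurableSet (cyl n x) := by
  have : cyl n x = ⋂ k : ℕ, ⋂ _ : k ≤ n, {w : PathSpace d | w k = x k} := by
    ext w; simp [cyl]
  rw [this]
  exact MeasurableSet.iInter fun k => MeasurableSet.iInter fun _ =>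
    measurableSet_eq_fun (measurable_pi_apply k) measurable_const

lemma mem_cyl_self {d : ℕ} (n : ℕ) (x : PathSpace d) : x ∈ cyl n x := fun _ _ => rfl

lemma pw_ofReal {d : ℕ} (n : ℕ) (x : PathSpace d) (ω : EnvOmega d) :
    pw n x ω = ENNReal.ofReal (pathWeight ω n x) := by
  rw [pw, pathWeight, ENNReal.ofReal_prod_of_nonneg fun k _ => (ω _).nonneg _]

lemma pw_le_one {d : ℕ} (n : ℕ) (x : PathSpace d) (ω : EnvOmega d) : pw n x ω ≤ 1 :=
  Finset.prod_le_one' fun k _ => by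
    simpa using ENNReal.ofReal_le_ofReal ((ω (x k)).prob_le_one (x (k + 1) - x k))

/-- Path weights are measurable with respect to the environment at the sites that are left. -/
lemma measurable_pw_of_mem {d : ℕ} (n : ℕ) (x : PathSpace d) (S : Set (Site d))
    (hS : ∀ k < n, x k ∈ S) :
    Measurable[⨆ z ∈ S, MeasurableSpace.comap (fun ω : EnvOmega d => ω z) inferInstance]
      (pw n x) := by
  have h : ∀ k ∈ Finset.range n,
      Measurable[⨆ z ∈ S, MeasurableSpace.comap (fun ω : EnvOmega d => ω z) inferInstance]
        (fun ω : EnvOmega d => ENNReal.ofReal ((ω (x k)).prob (x (k + 1) - x k))) := by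
    intro k hk
    have h1 : Measurable[MeasurableSpace.comap (fun ω : EnvOmega d => ω (x k)) inferInstance]
        (fun ω : EnvOmega d => ENNReal.ofReal ((ω (x k)).prob (x (k + 1) - x k))) :=
      (ENNReal.measurable_ofReal.comp (measurable_prob _)).comp
        (comap_measurable (fun ω : EnvOmega d => ω (x k)))
    exact h1.mono (le_iSup₂_of_le (x k) (hS k (Finset.mem_range.1 hk)) le_rfl) le_rfl
  exact @Finset.measurable_fun_prod _ _ _ _ _ _
    (⨆ z ∈ S, MeasurableSpace.comap (fun ω : EnvOmega d => ω z) inferInstance) _ _ h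

lemma measurable_pw {d : ℕ} (n : ℕ) (x : PathSpace d) : Measurable (pw (d := d) n x) := by
  unfold pw
  exact Finset.measurable_fun_prod _ fun k _ =>
    ENNReal.measurable_ofReal.comp ((measurable_prob _).comp (measurable_pi_apply (x k)))

lemma pw_congr {d : ℕ} {n : ℕ} {x y : PathSpace d} (h : ∀ k ≤ n, x k = y k) (ω : EnvOmega d) :
    pw n x ω = pw n y ω := by
  unfold pw
  refine Finset.prod_congr rfl fun k hk => ?_
  have := Finset.mem_range.1 hk
  rw [h k (by omega), h (k + 1) (by omega)]

lemma pw_succ {d : ℕ} (n : ℕ) (x : PathSpace d) (ω : EnvOmega d) :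
    pw (n + 1) x ω = pw n x ω * ENNReal.ofReal ((ω (x n)).prob (x (n + 1) - x n)) :=
  Finset.prod_range_succ _ n

section law
variable {d : ℕ} {μ : Measure (EnvDist d)} {P : Measure (RWSpace d)}

lemma IsRWRE.measure_inter (hP : IsRWRE μ P) (n : ℕ) (x : PathSpace d) {A : Set (EnvOmega d)}
    (hA : MeasurableSet A) :
    P {q | q.1 ∈ A ∧ q.2 ∈ cyl n x} =
      if x 0 = 0 then ∫⁻ ω in A, pw n x ω ∂(P.map Prod.fst) else 0 := by
  have := hP.1
  have := hP.2.1.2.1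
  have h := hP.2.2 n x A hA
  have hne : P {q | q.1 ∈ A ∧ q.2 ∈ cyl n x} ≠ ∞ := measure_ne_top _ _
  rw [← ENNReal.ofReal_toReal hne]
  change ENNReal.ofReal (P {q | q.1 ∈ A ∧ ∀ k ≤ n, q.2 k = x k}).toReal = _
  rw [h]
  split_ifs with h0
  · rw [one_mul, ofReal_integral_eq_lintegral_ofReal]
    · simp_rw [pw_ofReal]
    · have hm : Measurable fun ω : EnvOmega d => pathWeight ω n x := by
        have : (fun ω : EnvOmega d => pathWeight ω n x) = fun ω => (pw n x ω).toReal := by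
          ext ω
          rw [pw_ofReal, ENNReal.toReal_ofReal]
          exact Finset.prod_nonneg fun k _ => (ω _).nonneg _
        rw [this]
        exact (measurable_pw n x).ennreal_toReal
      refine Integrable.of_bound (C := 1) hm.aestronglyMeasurable (ae_of_all _ fun ω => ?_)
      rw [Real.norm_of_nonneg (show 0 ≤ pathWeight ω n x from
        Finset.prod_nonneg fun k _ => (ω _).nonneg _)]
      exact Finset.prod_le_one (fun k _ => (ω _).nonneg _) fun k _ => (ω _).prob_le_one _
    · exact ae_of_all _ fun ω => Finset.prod_nonneg fun k _ => (ω _).nonneg _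
  · simp

/-- Integrating a function of the environment over the event that the walk follows `x`. -/
lemma IsRWRE.setLIntegral_cyl (hP : IsRWRE μ P) (n : ℕ) (x : PathSpace d)
    {f : EnvOmega d → ℝ≥0∞} (hf : Measurable f) :
    ∫⁻ q in Prod.snd ⁻¹' cyl n x, f q.1 ∂P =
      if x 0 = 0 then ∫⁻ ω, f ω * pw n x ω ∂(P.map Prod.fst) else 0 := by
  have key : (P.restrict (Prod.snd ⁻¹' cyl n x)).map Prod.fst =
      (P.map Prod.fst).withDensity (fun ω => if x 0 = 0 then pw n x ω else 0) := by
    ext A hA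
    rw [Measure.map_apply measurable_fst hA, Measure.restrict_apply (measurable_fst hA),
      withDensity_apply _ hA]
    have := hP.measure_inter n x hA
    have h2 : Prod.fst ⁻¹' A ∩ Prod.snd ⁻¹' cyl n x =
        {q : RWSpace d | q.1 ∈ A ∧ q.2 ∈ cyl n x} := rfl
    rw [h2, this]
    split_ifs <;> simp
  rw [← lintegral_map hf measurable_fst, key, lintegral_withDensity_eq_lintegral_mul _ _ hf]
  · split_ifs
    · simp [mul_comm]
    · simp
  · split_ifs
    · exact measurable_pw n x
    · exact measurable_const

lemma IsRWRE.measure_cyl (hP : IsRWRE μ P) (n : ℕ) (x : PathSpace d) :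
    P (Prod.snd ⁻¹' cyl n x) = if x 0 = 0 then ∫⁻ ω, pw n x ω ∂(P.map Prod.fst) else 0 := by
  simpa using hP.setLIntegral_cyl n x (f := fun _ => 1) measurable_const

lemma IsRWRE.env_eq (hP : IsRWRE μ P) : P.map Prod.fst = Measure.infinitePi fun _ => μ := by
  have := hP.2.1.1
  refine Measure.eq_infinitePi _ fun s t ht => ?_
  rw [← hP.2.1.2.2 s t fun x _ => ht x]
  rfl

lemma IsRWRE.map_shift (hP : IsRWRE μ P) (z : Site d) :
    (P.map Prod.fst).map (shiftEnv z) = P.map Prod.fst := by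
  have := hP.2.1.1
  rw [hP.env_eq]
  refine Measure.eq_infinitePi _ fun s t ht => ?_
  rw [Measure.map_apply (measurable_shiftEnv z)
    (MeasurableSet.pi s.countable_toSet fun i _ => ht i), ← hP.env_eq]
  have h := hP.2.1.2.2 (s.map (addRightEmbedding z)) (fun x => t (x - z)) fun x _ => ht _
  simp only [Finset.mem_map, addRightEmbedding_apply, forall_exists_index, and_imp,
    forall_apply_eq_imp_iff₂, add_sub_cancel_right, Finset.prod_map] at h
  rw [← h]
  rfl

lemma IsRWRE.lintegral_shift (hP : IsRWRE μ P) (z : Site d) {f : EnvOmega d → ℝ≥0∞}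
    (hf : Measurable f) :
    ∫⁻ ω, f (shiftEnv z ω) ∂(P.map Prod.fst) = ∫⁻ ω, f ω ∂(P.map Prod.fst) := by
  rw [← lintegral_map hf (measurable_shiftEnv z), hP.map_shift]

/-- Functions of the environment in disjoint sets of sites are uncorrelated. -/
lemma IsRWRE.lintegral_mul (hP : IsRWRE μ P) {S T : Set (Site d)} (hST : Disjoint S T)
    {f g : EnvOmega d → ℝ≥0∞}
    (hf : Measurable[⨆ z ∈ S, MeasurableSpace.comap (fun ω : EnvOmega d => ω z) inferInstance] f)
    (hg : Measurable[⨆ z ∈ T, MeasurableSpace.comap (fun ω : EnvOmega d => ω z) inferInstance] g) :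
    ∫⁻ ω, f ω * g ω ∂(P.map Prod.fst) =
      (∫⁻ ω, f ω ∂(P.map Prod.fst)) * ∫⁻ ω, g ω ∂(P.map Prod.fst) := by
  have := hP.2.1.1
  have hle : ∀ z : Site d, MeasurableSpace.comap (fun ω : EnvOmega d => ω z) inferInstance ≤
      (inferInstance : MeasurableSpace (EnvOmega d)) :=
    fun z => (measurable_pi_apply z).comap_le
  refine ProbabilityTheory.lintegral_mul_eq_lintegral_mul_lintegral_of_independent_measurableSpace
    (iSup₂_le fun z _ => hle z) (iSup₂_le fun z _ => hle z) ?_ hf hg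
  refine ProbabilityTheory.indep_iSup_of_disjoint hle ?_ hST
  rw [hP.env_eq]
  exact ProbabilityTheory.iIndepFun_infinitePi (P := fun _ : Site d => μ)
    (X := fun _ γ => γ) fun _ => measurable_id
end law

/-! ### Measures on path space -/

lemma cyl_eq_preimage {d : ℕ} (n : ℕ) (w : PathSpace d) :
    cyl n w = (Preorder.frestrictLe (π := fun _ : ℕ => Site d) n) ⁻¹'
      {Preorder.frestrictLe n w} := by
  ext v
  constructor
  · exact fun hv => funext fun k => hv k (Finset.mem_Iic.1 k.2)
  · exact fun hv k hk => congrFun hv ⟨k, Finset.mem_Iic.2 hk⟩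

/-- A finite measure on paths is determined by its values on cylinders. -/
lemma path_ext {d : ℕ} {Q₁ Q₂ : Measure (PathSpace d)} [IsFiniteMeasure Q₁] [IsFiniteMeasure Q₂]
    (h : ∀ n x, Q₁ (cyl n x) = Q₂ (cyl n x)) : Q₁ = Q₂ := by
  have hfam : IsProjectiveMeasureFamily (α := fun _ : ℕ => Site d)
      (fun I : Finset ℕ => (Q₂.map I.restrict : Measure (I → Site d))) := by
    intro I J hJI
    rw [Measure.map_map (Finset.measurable_restrict₂ hJI) (Finset.measurable_restrict I)]
    rfl
  refine IsProjectiveLimit.unique (α := fun _ : ℕ => Site d)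
    (P := fun I : Finset ℕ => (Q₂.map I.restrict : Measure (I → Site d))) ?_ (fun I => rfl)
  rw [isProjectiveLimit_nat_iff hfam]
  intro n
  refine Measure.ext_of_singleton fun a => ?_
  have hs : MeasurableSet ({a} : Set (Finset.Iic n → Site d)) := measurableSet_singleton a
  rw [Measure.map_apply (Preorder.measurable_frestrictLe n) hs,
    Measure.map_apply (Finset.measurable_restrict _) hs]
  obtain ⟨x, rfl⟩ : ∃ x : PathSpace d, Preorder.frestrictLe (π := fun _ : ℕ => Site d) n x = a :=
    ⟨fun k => if hk : k ≤ n then a ⟨k, Finset.mem_Iic.2 hk⟩ else 0, by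
      ext1 ⟨k, hk⟩
      exact dif_pos (Finset.mem_Iic.1 hk)⟩
  have hx := h n x
  rw [cyl_eq_preimage] at hx
  exact hx

/-- The path `w` frozen at its first site outside `H`. -/
noncomputable def freeze {d : ℕ} (H : Set (Site d)) (w : PathSpace d) : PathSpace d
  | 0 => w 0
  | k + 1 => if freeze H w k ∈ H then w (k + 1) else freeze H w k

lemma measurable_freeze {d : ℕ} (H : Set (Site d)) : Measurable (freeze (d := d) H) := by
  refine measurable_pi_lambda _ fun k => ?_
  induction k with
  | zero => exact measurable_pi_apply 0
  | succ k ih =>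
    exact Measurable.ite (ih (Set.to_countable H).measurableSet) (measurable_pi_apply (k + 1)) ih

lemma freeze_eq {d : ℕ} {H : Set (Site d)} {w : PathSpace d} {n : ℕ} (h : ∀ k < n, w k ∈ H) :
    ∀ k ≤ n, freeze H w k = w k := by
  intro k hk
  induction k with
  | zero => rfl
  | succ k ih =>
    rw [freeze, ih (by omega), if_pos (h k (by omega))]

lemma freeze_eq' {d : ℕ} {H : Set (Site d)} {w : PathSpace d} {n : ℕ}
    (h : ∀ k < n, freeze H w k ∈ H) : ∀ k ≤ n, freeze H w k = w k := by
  intro k hk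
  induction k with
  | zero => rfl
  | succ k ih =>
    rw [freeze, if_pos (h k (by omega))]

/-- The freezing map pulls cylinders back to cylinders whose base stays in `H` before the final
time, or to the empty set. -/
lemma freeze_preimage_cyl {d : ℕ} (H : Set (Site d)) (y : PathSpace d) (n : ℕ) :
    freeze H ⁻¹' cyl n y = ∅ ∨
      ∃ m, (∀ k < m, y k ∈ H) ∧ freeze H ⁻¹' cyl n y = cyl m y := by
  induction n with
  | zero =>
    refine Or.inr ⟨0, by simp, ?_⟩
    ext w; simp [cyl, freeze]
  | succ n ih =>
    by_cases hy : ∀ k < n + 1, y k ∈ H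
    · refine Or.inr ⟨n + 1, hy, ?_⟩
      ext w
      constructor
      · intro hw k hk
        have hw' : ∀ k ≤ n + 1, freeze H w k = y k := hw
        rw [← freeze_eq' (w := w) (n := n + 1) (fun j hj => by rw [hw' j (by omega)]; exact hy j hj) k hk]
        exact hw' k hk
      · intro hw k hk
        have hw' : ∀ k ≤ n + 1, w k = y k := hw
        rw [freeze_eq (n := n + 1) (fun j hj => by rw [hw' j (by omega)]; exact hy j hj) k hk]
        exact hw' k hk
    · push Not at hy
      obtain ⟨j, hj, hjH⟩ := hy
      -- a path frozen at time `j` no longer moves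
      have hst : ∀ w ∈ freeze H ⁻¹' cyl n y, freeze H w (n + 1) = y n := by
        intro w hw
        have hw' : ∀ k ≤ n, freeze H w k = y k := hw
        have : ∀ k, freeze H w (j + k) = y j := by
          intro k
          induction k with
          | zero => exact hw' j (by omega)
          | succ k ihk => rw [← add_assoc, freeze, ihk, if_neg hjH]
        have h1 := this (n + 1 - j)
        have h2 := this (n - j)
        rw [show j + (n + 1 - j) = n + 1 by omega] at h1
        rw [show j + (n - j) = n by omega] at h2
        rw [h1, ← h2, hw' n le_rfl]
      have hsplit : ∀ w, w ∈ freeze H ⁻¹' cyl (n + 1) y ↔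
          w ∈ freeze H ⁻¹' cyl n y ∧ freeze H w (n + 1) = y (n + 1) := by
        intro w
        constructor
        · exact fun hw => ⟨fun k hk => hw k (by omega), hw (n + 1) le_rfl⟩
        · rintro ⟨hw, hw2⟩ k hk
          rcases Nat.lt_or_ge k (n + 1) with h | h
          · exact hw k (by omega)
          · rw [show k = n + 1 by omega]; exact hw2
      by_cases hyn : y (n + 1) = y n
      · have : freeze H ⁻¹' cyl (n + 1) y = freeze H ⁻¹' cyl n y := by
          ext w
          rw [hsplit]
          exact ⟨fun h => h.1, fun h => ⟨h, by rw [hst w h, hyn]⟩⟩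
        rw [this]; exact ih
      · refine Or.inl (eq_empty_of_forall_notMem fun w hw => ?_)
        obtain ⟨h1, h2⟩ := (hsplit w).1 hw
        exact hyn (by rw [← h2, hst w h1])

/-- Two finite measures that agree on the cylinders of paths in `H` agree on the events contained
in the event of staying in `H` forever. -/
lemma path_ext_stay {d : ℕ} {Q₁ Q₂ : Measure (PathSpace d)} [IsFiniteMeasure Q₁]
    [IsFiniteMeasure Q₂] (H : Set (Site d))
    (h : ∀ n x, (∀ k < n, x k ∈ H) → Q₁ (cyl n x) = Q₂ (cyl n x))
    {B : Set (PathSpace d)} (hB : MeasurableSet B) (hBH : ∀ w ∈ B, ∀ n, w n ∈ H) :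
    Q₁ B = Q₂ B := by
  have hmap : Q₁.map (freeze H) = Q₂.map (freeze H) := by
    refine path_ext fun n x => ?_
    rw [Measure.map_apply (measurable_freeze H) (measurableSet_cyl n x),
      Measure.map_apply (measurable_freeze H) (measurableSet_cyl n x)]
    rcases freeze_preimage_cyl H x n with h0 | ⟨m, hm, h0⟩
    · rw [h0]; simp
    · rw [h0, h m x hm]
  have hpre : freeze H ⁻¹' B = B := by
    ext w
    have key : ∀ hw : (∀ n, freeze H w n ∈ H) ∨ ∀ n, w n ∈ H, freeze H w = w := by
      rintro (hw | hw)
      · exact funext fun n => freeze_eq' (n := n) (fun k _ => hw k) n le_rfl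
      · exact funext fun n => freeze_eq (n := n) (fun k _ => hw k) n le_rfl
    constructor
    · intro hw
      rw [mem_preimage] at hw
      rwa [key (Or.inl (hBH _ hw))] at hw
    · intro hw
      rw [mem_preimage, key (Or.inr (hBH _ hw))]
      exact hw
  rw [← hpre, ← Measure.map_apply (measurable_freeze H) hB, hmap,
    Measure.map_apply (measurable_freeze H) hB]

/-! ### A conditional Borel–Cantelli principle -/

/-- A conditional Borel–Cantelli principle, by Lévy's upward theorem: if, whenever the trigger
`A n` occurs, the event `S` has conditional probability at least `c > 0` given the path up to time
`n`, then `S` holds almost surely when infinitely many triggers occur. -/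
lemma levy_trigger {d : ℕ} (Q : Measure (PathSpace d)) [IsFiniteMeasure Q]
    {S : Set (PathSpace d)} (hS : MeasurableSet S) {c : ℝ≥0∞} (hc : c ≠ 0)
    (A : ℕ → Set (PathSpace d))
    (hAS : ∀ n, ∀ x ∈ A n, c * Q (cyl n x) ≤ Q (cyl n x ∩ S)) :
    ∀ᵐ w ∂Q, (∃ᶠ n in atTop, w ∈ A n) → w ∈ S := by
  -- the constant may be taken finite
  obtain ⟨c, hc0, hAS⟩ : ∃ c : ℝ, 0 < c ∧
      ∀ n, ∀ x ∈ A n, c * Q.real (cyl n x) ≤ Q.real (cyl n x ∩ S) := by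
    refine ⟨(min c 1).toReal, ENNReal.toReal_pos (by simp [hc]) (by simp), fun n x hx => ?_⟩
    rw [measureReal_def, measureReal_def, ← ENNReal.toReal_mul]
    exact ENNReal.toReal_mono (measure_ne_top _ _)
      ((mul_le_mul_left (min_le_left c 1) _).trans (hAS n x hx))
  set ℱ : Filtration ℕ (MeasurableSpace.pi : MeasurableSpace (PathSpace d)) :=
    Filtration.piLE (X := fun _ : ℕ => Site d) with hℱ
  set g : PathSpace d → ℝ := S.indicator fun _ => 1 with hg
  have hgi : Integrable g Q := (integrable_const 1).indicator hS
  have hsup : (MeasurableSpace.pi : MeasurableSpace (PathSpace d)) ≤ ⨆ n, ℱ n := by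
    refine iSup_le fun k => ?_
    refine le_trans ?_ (le_iSup (fun n => (ℱ n : MeasurableSpace (PathSpace d))) k)
    rw [hℱ, Filtration.piLE_eq_comap_frestrictLe]
    have : Measurable[MeasurableSpace.comap (Preorder.frestrictLe k) MeasurableSpace.pi]
        (fun w : PathSpace d => w k) :=
      (measurable_pi_apply (⟨k, Finset.mem_Iic.2 le_rfl⟩ : Finset.Iic k)).comp
        (comap_measurable (Preorder.frestrictLe (π := fun _ : ℕ => Site d) k))
    exact this.comap_le
  have hgm : StronglyMeasurable[⨆ n, ℱ n] g :=
    (stronglyMeasurable_const.indicator hS).mono hsup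
  have hlim := hgi.tendsto_ae_condExp (ℱ := ℱ) hgm
  have hnull : ∀ n, ∀ᵐ w ∂Q, Q (cyl n w) ≠ 0 := by
    intro n
    have hsub : {w : PathSpace d | Q (cyl n w) = 0} ⊆
        ⋃ a : {a : Finset.Iic n → Site d //
          Q ((Preorder.frestrictLe (π := fun _ : ℕ => Site d) n) ⁻¹' {a}) = 0},
          (Preorder.frestrictLe (π := fun _ : ℕ => Site d) n) ⁻¹' {a.1} := by
      intro w hw
      refine mem_iUnion.2 ⟨⟨Preorder.frestrictLe n w, ?_⟩, rfl⟩
      rw [← cyl_eq_preimage]; exact hw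
    rw [ae_iff]
    simp only [not_not]
    refine measure_mono_null hsub ((measure_iUnion_null_iff).2 fun a => a.2)
  filter_upwards [hlim, ae_all_iff.2 hnull] with w hw hpos hfreq
  -- on a trigger, the conditional probability is at least `c`
  have hlow : ∀ n, w ∈ A n → c ≤ (Q[g | ℱ n]) w := by
    intro n hn
    have hdep := (stronglyMeasurable_condExp (m := ℱ n) (μ := Q) (f := g)).dependsOn_of_piLE
    have hmeas : MeasurableSet[ℱ n] (cyl n w) := by
      have : cyl n w = ⋂ k : ℕ, ⋂ _ : k ≤ n, (fun v : PathSpace d => v k) ⁻¹' {w k} := by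
        ext v; simp [cyl]
      rw [this]
      refine MeasurableSet.iInter fun k => MeasurableSet.iInter fun hk => ?_
      have hm : Measurable[ℱ n] (fun v : PathSpace d => v k) := by
        rw [hℱ, Filtration.piLE_eq_comap_frestrictLe]
        exact (measurable_pi_apply (⟨k, Finset.mem_Iic.2 hk⟩ : Finset.Iic n)).comp
          (comap_measurable (Preorder.frestrictLe (π := fun _ : ℕ => Site d) n))
      exact hm (measurableSet_singleton _)
    have hint := setIntegral_condExp (ℱ.le n) hgi hmeas
    have hconst : ∫ v in cyl n w, (Q[g | ℱ n]) v ∂Q = ∫ _ in cyl n w, (Q[g | ℱ n]) w ∂Q := by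
      refine setIntegral_congr_fun (measurableSet_cyl n w) fun v hv => ?_
      exact hdep fun k hk => hv k hk
    rw [hconst, setIntegral_const, hg, setIntegral_indicator hS, setIntegral_const] at hint
    simp only [smul_eq_mul, mul_one] at hint
    have hq : 0 < Q.real (cyl n w) :=
      ENNReal.toReal_pos (hpos n) (measure_ne_top _ _)
    have := hAS n w hn
    rw [← hint, mul_comm] at this
    exact le_of_mul_le_mul_left this hq
  by_contra hwS
  have h0 : g w = 0 := by rw [hg]; exact indicator_of_notMem hwS _
  rw [h0] at hw
  have hev : ∀ᶠ n in atTop, (Q[g | ℱ n]) w < c := hw.eventually (gt_mem_nhds hc0)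
  obtain ⟨n, hn1, hn2⟩ := (hfreq.and_eventually hev).exists
  exact absurd (hlow n hn1) (not_le.2 hn2)

/-! ### The annealed Markov property -/

/-- The environment and the path after time `n`, both recentred at `z`. -/
def recenter {d : ℕ} (n : ℕ) (z : Site d) (q : RWSpace d) : RWSpace d :=
  (shiftEnv z q.1, fun m => q.2 (n + m) - z)

lemma measurable_recenter {d : ℕ} (n : ℕ) (z : Site d) : Measurable (recenter (d := d) n z) :=
  ((measurable_shiftEnv z).comp measurable_fst).prodMk <| measurable_pi_lambda _ fun m =>
    ((measurable_pi_apply (n + m)).comp measurable_snd).sub measurable_const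

lemma shiftEnv_neg {d : ℕ} (z : Site d) (ω : EnvOmega d) : shiftEnv (-z) (shiftEnv z ω) = ω := by
  funext x; simp [shiftEnv]

/-- The path that follows `x` up to time `n` and then the translate of `y`. -/
def splice {d : ℕ} (n : ℕ) (x y : PathSpace d) : PathSpace d :=
  fun k => if k ≤ n then x k else x n + y (k - n)

lemma splice_add {d : ℕ} (n : ℕ) (x y : PathSpace d) (hy : y 0 = 0) (j : ℕ) :
    splice n x y (n + j) = x n + y j := by
  unfold splice
  split_ifs with h
  · have : j = 0 := by omega
    subst this; simp [hy]
  · rw [Nat.add_sub_cancel_left]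

lemma pw_splice {d : ℕ} (n m : ℕ) (x y : PathSpace d) (hy : y 0 = 0) (ω : EnvOmega d) :
    pw (n + m) (splice n x y) ω = pw n x ω * pw m y (shiftEnv (x n) ω) := by
  unfold pw
  rw [Finset.prod_range_add]
  congr 1
  · refine Finset.prod_congr rfl fun k hk => ?_
    have := Finset.mem_range.1 hk
    simp only [splice, if_pos this.le, if_pos (show k + 1 ≤ n from this)]
  · refine Finset.prod_congr rfl fun j _ => ?_
    rw [add_assoc, splice_add n x y hy, splice_add n x y hy]
    simp only [shiftEnv, add_comm (x n), add_sub_add_right_eq_sub]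

section law
variable {d : ℕ} {μ : Measure (EnvDist d)} {P : Measure (RWSpace d)}

/-- The Markov property combined with stationarity of the environment: following `x` for `n` steps
and then having a recentred environment and future in `E` amounts to weighting `E` by the quenched
weight of `x` in the environment translated back. -/
lemma IsRWRE.markov (hP : IsRWRE μ P) (n : ℕ) (x : PathSpace d) (hx : x 0 = 0)
    {E : Set (RWSpace d)} (hE : MeasurableSet E) :
    P {q | q.2 ∈ cyl n x ∧ recenter n (x n) q ∈ E} =
      ∫⁻ q in E, pw n x (shiftEnv (-x n) q.1) ∂P := by
  have := hP.1
  set W : EnvOmega d → ℝ≥0∞ := fun ω => pw n x (shiftEnv (-x n) ω) with hW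
  have hWm : Measurable W := (measurable_pw n x).comp (measurable_shiftEnv _)
  have hcm : MeasurableSet (Prod.snd ⁻¹' cyl n x : Set (RWSpace d)) :=
    measurable_snd (measurableSet_cyl n x)
  have hfin : IsFiniteMeasure (P.withDensity fun q => W q.1) := by
    refine isFiniteMeasure_withDensity (ne_of_lt ?_)
    refine lt_of_le_of_lt (lintegral_mono fun q => pw_le_one n x _) ?_
    simp
  have hMs : (P.restrict (Prod.snd ⁻¹' cyl n x)).map (recenter n (x n)) =
      P.withDensity fun q => W q.1 := by
    refine Measure.ext_prod fun {s t} hs ht => ?_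
    set M₁ := (P.restrict (Prod.snd ⁻¹' cyl n x)).map (recenter n (x n)) with hM₁
    set M₂ := P.withDensity fun q => W q.1 with hM₂
    have hQ : (M₁.restrict (Prod.fst ⁻¹' s)).map Prod.snd =
        (M₂.restrict (Prod.fst ⁻¹' s)).map Prod.snd := by
      refine path_ext fun m y => ?_
      have hsm : MeasurableSet (Prod.fst ⁻¹' s : Set (RWSpace d)) := measurable_fst hs
      have hym : MeasurableSet (Prod.snd ⁻¹' cyl m y : Set (RWSpace d)) :=
        measurable_snd (measurableSet_cyl m y)
      rw [Measure.map_apply measurable_snd (measurableSet_cyl m y),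
        Measure.map_apply measurable_snd (measurableSet_cyl m y),
        Measure.restrict_apply hym, Measure.restrict_apply hym, hM₁, hM₂,
        Measure.map_apply (measurable_recenter n (x n)) (hym.inter hsm),
        Measure.restrict_apply (measurable_recenter n (x n) (hym.inter hsm)),
        withDensity_apply _ (hym.inter hsm), inter_comm (Prod.snd ⁻¹' cyl m y)]
      have hR : ∫⁻ q in Prod.fst ⁻¹' s ∩ Prod.snd ⁻¹' cyl m y, W q.1 ∂P =
          ∫⁻ q in Prod.snd ⁻¹' cyl m y, s.indicator W q.1 ∂P := by
        rw [← Measure.restrict_restrict hsm, ← lintegral_indicator hsm]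
        rfl
      rw [hR, hP.setLIntegral_cyl m y (hWm.indicator hs)]
      split_ifs with hy
      · have hset : recenter n (x n) ⁻¹' (Prod.fst ⁻¹' s ∩ Prod.snd ⁻¹' cyl m y) ∩
            Prod.snd ⁻¹' cyl n x =
            {q : RWSpace d | q.1 ∈ shiftEnv (x n) ⁻¹' s ∧ q.2 ∈ cyl (n + m) (splice n x y)} := by
          ext q
          constructor
          · rintro ⟨⟨h1, h2⟩, h3⟩
            refine ⟨h1, fun k hk => ?_⟩
            by_cases hkn : k ≤ n
            · simp only [splice, if_pos hkn]; exact h3 k hkn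
            · obtain ⟨j, rfl⟩ := Nat.exists_eq_add_of_le (not_le.1 hkn).le
              rw [splice_add n x y hy]
              have h4 : q.2 (n + j) - x n = y j := h2 j (by omega)
              rw [← h4]; abel
          · rintro ⟨h1, h2⟩
            refine ⟨⟨h1, fun j hj => ?_⟩, fun k hk => ?_⟩
            · change q.2 (n + j) - x n = y j
              rw [h2 (n + j) (by omega), splice_add n x y hy]; abel
            · rw [h2 k (by omega)]; simp only [splice, if_pos hk]
        rw [hset, hP.measure_inter _ _ (measurable_shiftEnv (x n) hs), if_pos (by
          simp [splice, hx]), ← lintegral_indicator (measurable_shiftEnv (x n) hs),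
          ← hP.lintegral_shift (x n) (f := fun ω => s.indicator W ω * pw m y ω)
            ((hWm.indicator hs).mul (measurable_pw m y))]
        refine lintegral_congr fun ω => ?_
        by_cases hω : shiftEnv (x n) ω ∈ s
        · rw [indicator_of_mem (show ω ∈ shiftEnv (x n) ⁻¹' s from hω),
            indicator_of_mem hω, pw_splice n m x y hy]
          simp only [hW, shiftEnv_neg]
        · rw [indicator_of_notMem (show ω ∉ shiftEnv (x n) ⁻¹' s from hω),
            indicator_of_notMem hω, zero_mul]
      · refine measure_mono_null (t := ∅) ?_ measure_empty
        rintro q ⟨⟨_, h2⟩, h3⟩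
        have h4 : q.2 (n + 0) - x n = y 0 := h2 0 (Nat.zero_le _)
        rw [add_zero, h3 n le_rfl, sub_self] at h4
        exact hy h4.symm
    have h := congrArg (fun Q => Q t) hQ
    simp only [Measure.map_apply measurable_snd ht,
      Measure.restrict_apply (measurable_snd ht)] at h
    rw [inter_comm] at h
    exact h
  have h := congrArg (fun M => M E) hMs
  simp only [Measure.map_apply (measurable_recenter n (x n)) hE, withDensity_apply _ hE,
    Measure.restrict_apply (measurable_recenter n (x n) hE)] at h
  rw [← h, inter_comm]
  rfl
end law

/-! ### Heights and directional events -/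

lemma dotR_add {d : ℕ} (x y : Site d) (l : Fin d → ℝ) : dotR (x + y) l = dotR x l + dotR y l := by
  simp [dotR, add_mul, Finset.sum_add_distrib]

lemma dotR_sub {d : ℕ} (x y : Site d) (l : Fin d → ℝ) : dotR (x - y) l = dotR x l - dotR y l := by
  simp [dotR, sub_mul, Finset.sum_sub_distrib]

lemma dotR_zero {d : ℕ} (l : Fin d → ℝ) : dotR (0 : Site d) l = 0 := by simp [dotR]

lemma dotR_nsmul {d : ℕ} (n : ℕ) (x : Site d) (l : Fin d → ℝ) :
    dotR (n • x) l = n * dotR x l := by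
  simp [dotR, Finset.mul_sum, mul_assoc]

lemma dotR_zsmul {d : ℕ} (n : ℤ) (x : Site d) (l : Fin d → ℝ) :
    dotR (n • x) l = n * dotR x l := by
  simp [dotR, Finset.mul_sum, mul_assoc]

lemma measurable_dotR {d : ℕ} (l : Fin d → ℝ) (n : ℕ) :
    Measurable fun w : PathSpace d => dotR (w n) l :=
  (measurable_of_countable fun x : Site d => dotR x l).comp (measurable_pi_apply n)

/-- The event `A₊(ℓ)`, as a set of paths. -/
def goesUp {d : ℕ} (l : Fin d → ℝ) : Set (PathSpace d) :=
  {w | Tendsto (fun n => dotR (w n) l) atTop atTop}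

/-- The event that `A₊(ℓ)` occurs and the path stays in the half-space `{x · ℓ ≥ 0}`. -/
def goesUpStay {d : ℕ} (l : Fin d → ℝ) : Set (PathSpace d) :=
  {w | Tendsto (fun n => dotR (w n) l) atTop atTop ∧ ∀ n, 0 ≤ dotR (w n) l}

lemma measurableSet_goesUp {d : ℕ} (l : Fin d → ℝ) : MeasurableSet (goesUp (d := d) l) :=
  measurableSet_tendsto _ fun n => measurable_dotR l n

lemma measurableSet_goesUpStay {d : ℕ} (l : Fin d → ℝ) : MeasurableSet (goesUpStay (d := d) l) := by
  have : goesUpStay (d := d) l = goesUp l ∩ ⋂ n, {w : PathSpace d | 0 ≤ dotR (w n) l} := by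
    ext w; simp [goesUpStay, goesUp]
  rw [this]
  exact (measurableSet_goesUp l).inter
    (MeasurableSet.iInter fun n => measurableSet_le measurable_const (measurable_dotR l n))

/-- Countably many cylinders of a given length cover the path space. -/
lemma exists_countable_cyl_cover (d n : ℕ) :
    ∃ R : Set (PathSpace d), R.Countable ∧ ∀ w, ∃ x ∈ R, w ∈ cyl n x := by
  refine ⟨range fun a : Finset.Iic n → Site d =>
    fun k => if hk : k ≤ n then a ⟨k, Finset.mem_Iic.2 hk⟩ else 0, countable_range _, fun w => ?_⟩
  refine ⟨_, ⟨fun k => w k, rfl⟩, fun k hk => ?_⟩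
  simp [hk]

lemma pw_shiftEnv_neg {d : ℕ} (n : ℕ) (x : PathSpace d) (z : Site d) (ω : EnvOmega d) :
    pw n x (shiftEnv (-z) ω) = pw n (fun k => x k - z) ω := by
  simp [pw, shiftEnv, sub_eq_add_neg]

section law
variable {d : ℕ} {μ : Measure (EnvDist d)} {P : Measure (RWSpace d)}

/-- An event is null if it is null on every cylinder of some fixed length. -/
lemma null_of_cyl (n : ℕ) {E : Set (RWSpace d)}
    (h : ∀ x, P {q | q.2 ∈ cyl n x ∧ q ∈ E} = 0) : P E = 0 := by
  obtain ⟨R, hR, hcov⟩ := exists_countable_cyl_cover d n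
  have : E ⊆ ⋃ x ∈ R, {q : RWSpace d | q.2 ∈ cyl n x ∧ q ∈ E} := by
    intro q hq
    obtain ⟨x, hx, hqx⟩ := hcov q.2
    exact mem_iUnion₂.2 ⟨x, hx, hqx, hq⟩
  exact measure_mono_null this ((measure_biUnion_null_iff hR).2 fun x _ => h x)

lemma IsRWRE.markov_le (hP : IsRWRE μ P) (n : ℕ) (x : PathSpace d)
    {E : Set (RWSpace d)} (hE : MeasurableSet E) :
    P {q | q.2 ∈ cyl n x ∧ recenter n (x n) q ∈ E} ≤ P E := by
  by_cases hx : x 0 = 0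
  · rw [hP.markov n x hx hE]
    refine (lintegral_mono fun q => pw_le_one n x _).trans ?_
    simp
  · have h := hP.measure_cyl n x
    rw [if_neg hx] at h
    rw [measure_mono_null (fun q hq => hq.1) h]
    exact zero_le

/-! ### Transience and records -/

/-- If the walk goes up then it attains a minimal height, and from then on the recentred walk goes
up without backtracking below its starting height. -/
lemma IsRWRE.stay_pos (hP : IsRWRE μ P) (l : Fin d → ℝ)
    (h : P (Prod.snd ⁻¹' goesUp l) ≠ 0) : P (Prod.snd ⁻¹' goesUpStay l) ≠ 0 := by
  intro h0
  apply h
  have hsub : Prod.snd ⁻¹' goesUp l ⊆ ⋃ n, {q : RWSpace d |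
      recenter n (q.2 n) q ∈ (Prod.snd ⁻¹' goesUpStay l : Set (RWSpace d))} := by
    intro q hq
    have hq' : Tendsto (fun n => dotR (q.2 n) l) atTop atTop := hq
    have hmin : ∃ n, ∀ m, dotR (q.2 n) l ≤ dotR (q.2 m) l := by
      have := hq'
      rw [← Nat.cofinite_eq_atTop] at this
      exact this.exists_forall_le
    obtain ⟨n, hn⟩ := hmin
    refine mem_iUnion.2 ⟨n, ?_, fun m => ?_⟩
    · change Tendsto (fun m => dotR (q.2 (n + m) - q.2 n) l) atTop atTop
      simp only [dotR_sub]
      simp only [sub_eq_add_neg]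
      refine tendsto_atTop_add_const_right _ _ (hq'.comp ?_)
      simpa [add_comm] using tendsto_add_atTop_nat n
    · change 0 ≤ dotR (q.2 (n + m) - q.2 n) l
      rw [dotR_sub]
      exact sub_nonneg.2 (hn _)
  refine measure_mono_null hsub (measure_iUnion_null fun n => null_of_cyl n fun x => ?_)
  have hle := hP.markov_le n x (measurable_snd (measurableSet_goesUpStay l))
  rw [h0] at hle
  refine measure_mono_null ?_ (le_antisymm hle zero_le)
  rintro q ⟨h1, h2⟩
  refine ⟨h1, ?_⟩
  rw [← h1 n le_rfl]
  exact h2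

/-- At a strict record in direction `ℓ`, whatever its past, the walk goes up with at least the
probability that it goes up from time zero without backtracking: the sites ahead are independent of
those already left. -/
lemma IsRWRE.record_bound (hP : IsRWRE μ P) (l : Fin d → ℝ) (n : ℕ) (x : PathSpace d)
    (hx : ∀ m < n, dotR (x m) l < dotR (x n) l) :
    P (Prod.snd ⁻¹' goesUpStay l) * (P.map Prod.snd) (cyl n x) ≤
      (P.map Prod.snd) (cyl n x ∩ goesUp l) := by
  have := hP.1
  have := hP.2.1.2.1
  have hB := measurableSet_goesUpStay (d := d) l
  rw [Measure.map_apply measurable_snd (measurableSet_cyl n x), Measure.map_apply measurable_snd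
    ((measurableSet_cyl n x).inter (measurableSet_goesUp l))]
  by_cases hx0 : x 0 = 0
  swap
  · rw [hP.measure_cyl, if_neg hx0, mul_zero]; exact zero_le
  set W : EnvOmega d → ℝ≥0∞ := fun ω => pw n x (shiftEnv (-x n) ω) with hW
  have hWeq : W = pw n (fun k => x k - x n) := funext fun ω => pw_shiftEnv_neg n x (x n) ω
  have hWm : Measurable W := (measurable_pw n x).comp (measurable_shiftEnv _)
  have hc0 : ∫⁻ ω, W ω ∂(P.map Prod.fst) = P (Prod.snd ⁻¹' cyl n x) := by
    rw [hP.lintegral_shift (-x n) (measurable_pw n x), hP.measure_cyl, if_pos hx0]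
  set H : Set (Site d) := {z | 0 ≤ dotR z l} with hH
  have hfin : IsFiniteMeasure (P.withDensity fun q => W q.1) := by
    refine isFiniteMeasure_withDensity (ne_of_lt ?_)
    refine lt_of_le_of_lt (lintegral_mono fun q => pw_le_one n x _) ?_
    simp
  have hfin2 : IsFiniteMeasure (P (Prod.snd ⁻¹' cyl n x) • P.map Prod.snd) :=
    Measure.smul_finite _ (measure_ne_top _ _)
  -- the weight of the past involves only sites outside `H`, that of a future inside `H` only
  -- sites of `H`
  have heq := path_ext_stay (Q₁ := (P.withDensity fun q => W q.1).map Prod.snd)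
    (Q₂ := P (Prod.snd ⁻¹' cyl n x) • P.map Prod.snd) H (fun m y hy => by
      rw [Measure.smul_apply, Measure.map_apply measurable_snd (measurableSet_cyl m y),
        Measure.map_apply measurable_snd (measurableSet_cyl m y),
        withDensity_apply _ (measurable_snd (measurableSet_cyl m y)), hP.setLIntegral_cyl m y hWm,
        hP.measure_cyl m y, ← hc0]
      split_ifs
      · rw [smul_eq_mul]
        refine hP.lintegral_mul (S := Hᶜ) (T := H) disjoint_compl_left ?_ (measurable_pw_of_mem m y H hy)
        rw [hWeq]
        refine measurable_pw_of_mem n _ _ fun k hk => ?_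
        change ¬ (0 ≤ dotR (x k - x n) l)
        rw [dotR_sub, not_le]
        exact sub_neg.2 (hx k hk)
      · simp) hB (fun w hw k => hw.2 k)
  rw [Measure.smul_apply, Measure.map_apply measurable_snd hB, Measure.map_apply measurable_snd hB,
    withDensity_apply _ (measurable_snd hB), ← hP.markov n x hx0 (measurable_snd hB), smul_eq_mul,
    mul_comm] at heq
  rw [← heq]
  refine measure_mono ?_
  rintro q ⟨h1, h2⟩
  refine ⟨h1, ?_⟩
  have h3 : Tendsto (fun m => dotR (q.2 (n + m) - x n) l) atTop atTop := h2.1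
  simp only [dotR_sub] at h3
  have h4 := tendsto_atTop_add_const_right _ (dotR (x n) l) h3
  simp only [sub_add_cancel] at h4
  have h5 : Tendsto (fun m => (fun k => dotR (q.2 k) l) (m + n)) atTop atTop := by
    simpa only [add_comm n] using h4
  exact (tendsto_add_atTop_iff_nat n).1 h5

/-- Almost surely, a walk whose heights are unbounded above goes up. -/
lemma IsRWRE.goesUp_of_unbounded (hP : IsRWRE μ P) (l : Fin d → ℝ)
    (h : P (Prod.snd ⁻¹' goesUp l) ≠ 0) :
    ∀ᵐ q ∂P, (∀ C : ℝ, ∃ n, C < dotR (q.2 n) l) → q.2 ∈ goesUp l := by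
  have := hP.1
  have hL := levy_trigger (P.map Prod.snd) (measurableSet_goesUp l) (hP.stay_pos l h)
    (fun n => {w | ∀ m < n, dotR (w m) l < dotR (w n) l}) fun n x hx => hP.record_bound l n x hx
  filter_upwards [ae_of_ae_map measurable_snd.aemeasurable hL] with q hq hC
  refine hq (frequently_atTop.2 fun N => ?_)
  obtain ⟨C, hCN⟩ : ∃ C, ∀ k ≤ N, dotR (q.2 k) l ≤ C := by
    obtain ⟨C, hC⟩ := ((finite_Iic N).image fun k => dotR (q.2 k) l).bddAbove
    exact ⟨C, fun k hk => hC ⟨k, hk, rfl⟩⟩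
  refine ⟨Nat.find (hC C), ?_, fun m hm => ?_⟩
  · by_contra hlt
    exact absurd (Nat.find_spec (hC C)) (not_lt.2 (hCN _ (not_le.1 hlt).le))
  · exact (not_lt.1 (Nat.find_min (hC C) hm)).trans_lt (Nat.find_spec (hC C))

/-! ### Fresh half-lines and recurrent sites -/

/-- A step from a site that has not been visited before has its annealed probability. -/
lemma IsRWRE.fresh_step (hP : IsRWRE μ P) (n : ℕ) (y : PathSpace d) (hy : ∀ k < n, y k ≠ y n) :
    P (Prod.snd ⁻¹' cyl (n + 1) y) = P (Prod.snd ⁻¹' cyl n y) *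
      ∫⁻ ω, ENNReal.ofReal ((ω 0).prob (y (n + 1) - y n)) ∂(P.map Prod.fst) := by
  rw [hP.measure_cyl, hP.measure_cyl]
  split_ifs
  · have hm : Measurable fun ω : EnvOmega d => ENNReal.ofReal ((ω 0).prob (y (n + 1) - y n)) :=
      ENNReal.measurable_ofReal.comp ((measurable_prob _).comp (measurable_pi_apply 0))
    rw [← hP.lintegral_shift (y n) hm]
    simp only [shiftEnv, zero_add, pw_succ]
    refine hP.lintegral_mul (S := {y n}ᶜ) (T := {y n}) disjoint_compl_left
      (measurable_pw_of_mem n y _ fun k hk => hy k hk) ?_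
    have h1 : Measurable[MeasurableSpace.comap (fun ω : EnvOmega d => ω (y n)) inferInstance]
        (fun ω : EnvOmega d => ENNReal.ofReal ((ω (y n)).prob (y (n + 1) - y n))) :=
      (ENNReal.measurable_ofReal.comp (measurable_prob _)).comp
        (comap_measurable (fun ω : EnvOmega d => ω (y n)))
    exact h1.mono (le_iSup₂_of_le (y n) rfl le_rfl) le_rfl
  · simp

/-- If no site of the half-line from `x n` in direction `e` has been visited, the next `K` steps
are all equal to `e` with the annealed probability of `e` to the power `K`. -/
lemma IsRWRE.fresh_run (hP : IsRWRE μ P) {l : Fin d → ℝ} {e : Site d} (he : 0 < dotR e l) (n : ℕ)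
    (x : PathSpace d) (hx : ∀ m < n, ∀ i : ℕ, x m ≠ x n + i • e) (K : ℕ) :
    P (Prod.snd ⁻¹' cyl (n + K) (splice n x fun j => j • e)) = P (Prod.snd ⁻¹' cyl n x) *
      (∫⁻ ω, ENNReal.ofReal ((ω 0).prob e) ∂(P.map Prod.fst)) ^ K := by
  have hs := splice_add n x (fun j => j • e) (zero_smul ℕ e)
  induction K with
  | zero =>
    rw [pow_zero, mul_one, add_zero]
    congr 2
    ext w
    refine forall₂_congr fun k hk => ?_
    simp [splice, hk]
  | succ K ih =>
    rw [← add_assoc, hP.fresh_step, ih, pow_succ, mul_assoc]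
    · have : splice n x (fun j => j • e) (n + K + 1) - splice n x (fun j => j • e) (n + K) = e := by
        rw [add_assoc, hs, hs, add_smul, one_smul]; abel
      rw [this]
    · intro k hk
      rw [hs]
      rcases Nat.lt_or_ge k n with h | h
      · simp only [splice, if_pos h.le]
        exact hx k h K
      · obtain ⟨j, rfl⟩ := Nat.exists_eq_add_of_le h
        rw [hs]
        intro heq
        have h1 := congrArg (fun z => dotR z l) (add_left_cancel heq)
        simp only [dotR_nsmul] at h1
        have h2 := mul_right_cancel₀ he.ne' h1
        have : j = K := by exact_mod_cast h2
        omega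

/-- Almost surely, a walk that infinitely often enters from height at least `u` a half-line in
direction `e` with no visited site ahead eventually exceeds any given height `v`. -/
lemma IsRWRE.exceeds_of_fresh (hP : IsRWRE μ P) {l : Fin d → ℝ} {e : Site d} (he : 0 < dotR e l)
    (hα : ∫⁻ ω, ENNReal.ofReal ((ω 0).prob e) ∂(P.map Prod.fst) ≠ 0) (u v : ℝ) :
    ∀ᵐ q ∂P, (∃ᶠ n in atTop, u ≤ dotR (q.2 n) l ∧ ∀ m < n, ∀ i : ℕ, q.2 m ≠ q.2 n + i • e) →
      ∃ n, v < dotR (q.2 n) l := by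
  have := hP.1
  obtain ⟨K, hK⟩ := exists_nat_gt ((v - u) / dotR e l)
  have hK' : v < u + K * dotR e l := by
    have := (div_lt_iff₀ he).1 hK
    linarith
  have hS : MeasurableSet {w : PathSpace d | ∃ n, v < dotR (w n) l} := by
    have : {w : PathSpace d | ∃ n, v < dotR (w n) l} =
        ⋃ n, {w : PathSpace d | v < dotR (w n) l} := by ext w; simp
    rw [this]
    exact MeasurableSet.iUnion fun n => measurableSet_lt measurable_const (measurable_dotR l n)
  have hL := levy_trigger (P.map Prod.snd) hS (pow_ne_zero K hα)
    (fun n => {w | u ≤ dotR (w n) l ∧ ∀ m < n, ∀ i : ℕ, w m ≠ w n + i • e}) (by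
      rintro n x ⟨hu, hx⟩
      rw [Measure.map_apply measurable_snd (measurableSet_cyl n x),
        Measure.map_apply measurable_snd ((measurableSet_cyl n x).inter hS), mul_comm,
        ← hP.fresh_run he n x hx K]
      refine measure_mono fun q hq => ?_
      have hs := splice_add n x (fun j => j • e) (zero_smul ℕ e)
      refine ⟨fun k hk => ?_, n + K, ?_⟩
      · have h1 := hq k (by omega)
        simpa [splice, hk] using h1
      · rw [hq (n + K) le_rfl, hs, dotR_add, dotR_nsmul]
        linarith)
  exact ae_of_ae_map measurable_snd.aemeasurable hL

/-- Almost surely every step of the walk has positive quenched probability. -/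
lemma IsRWRE.steps_pos (hP : IsRWRE μ P) :
    ∀ᵐ q ∂P, ∀ n, 0 < (q.1 (q.2 n)).prob (q.2 (n + 1) - q.2 n) := by
  refine ae_all_iff.2 fun n => ?_
  rw [ae_iff]
  refine null_of_cyl (n + 1) fun x => ?_
  have hA : MeasurableSet {ω : EnvOmega d | (ω (x n)).prob (x (n + 1) - x n) ≤ 0} :=
    measurableSet_le ((measurable_prob _).comp (measurable_pi_apply _)) measurable_const
  have h := hP.measure_inter (n + 1) x hA
  have h0 : ∫⁻ ω in {ω : EnvOmega d | (ω (x n)).prob (x (n + 1) - x n) ≤ 0}, pw (n + 1) x ω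
      ∂(P.map Prod.fst) = 0 := by
    refine (setLIntegral_congr_fun hA fun ω hω => ?_).trans lintegral_zero
    rw [pw_succ, ENNReal.ofReal_of_nonpos hω, mul_zero]
  rw [h0, ite_self] at h
  refine measure_mono_null ?_ h
  rintro q ⟨h1, h2⟩
  refine ⟨?_, h1⟩
  have h3 : ¬ 0 < (q.1 (q.2 n)).prob (q.2 (n + 1) - q.2 n) := h2
  rw [h1 n (by omega), h1 (n + 1) le_rfl] at h3
  exact not_lt.1 h3

/-- Almost surely, if a site is visited infinitely often then so are its out-neighbours. -/
lemma IsRWRE.recurrent_step (hP : IsRWRE μ P) :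
    ∀ᵐ q ∂P, ∀ y z, 0 < (q.1 y).prob (z - y) → (∃ᶠ n in atTop, q.2 n = y) →
      ∃ᶠ n in atTop, q.2 n = z := by
  have := hP.1
  have key : ∀ (y z : Site d) (j N : ℕ), ∀ᵐ q ∂P, ((1 : ℝ) / (j + 1)) ≤ (q.1 y).prob (z - y) →
      (∃ᶠ n in atTop, q.2 n = y) → ∃ n, N ≤ n ∧ q.2 n = z := by
    intro y z j N
    set δ : ℝ := 1 / (j + 1) with hδ
    have hδ0 : 0 < δ := Nat.one_div_pos_of_nat
    set A : Set (EnvOmega d) := {ω | δ ≤ (ω y).prob (z - y)} with hAdef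
    have hA : MeasurableSet A :=
      measurableSet_le measurable_const ((measurable_prob _).comp (measurable_pi_apply _))
    have hAm : MeasurableSet (Prod.fst ⁻¹' A : Set (RWSpace d)) := measurable_fst hA
    have hS : MeasurableSet {w : PathSpace d | ∃ n, N ≤ n ∧ w n = z} := by
      have : {w : PathSpace d | ∃ n, N ≤ n ∧ w n = z} =
          ⋃ n, ⋃ _ : N ≤ n, {w : PathSpace d | w n = z} := by ext w; simp
      rw [this]
      exact MeasurableSet.iUnion fun n => MeasurableSet.iUnion fun _ =>
        measurableSet_eq_fun (measurable_pi_apply n) measurable_const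
    have hcyl : ∀ n x, ((P.restrict (Prod.fst ⁻¹' A)).map Prod.snd) (cyl n x) =
        if x 0 = 0 then ∫⁻ ω in A, pw n x ω ∂(P.map Prod.fst) else 0 := by
      intro n x
      rw [Measure.map_apply measurable_snd (measurableSet_cyl n x),
        Measure.restrict_apply (measurable_snd (measurableSet_cyl n x)),
        ← hP.measure_inter n x hA, inter_comm]
      rfl
    have hL := levy_trigger ((P.restrict (Prod.fst ⁻¹' A)).map Prod.snd) hS
      (ENNReal.ofReal_pos.2 hδ0).ne' (fun n => {w | N ≤ n ∧ w n = y}) (by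
        rintro n x ⟨hn, hxy⟩
        set x' : PathSpace d := fun k => if k ≤ n then x k else z with hx'
        have hsub : cyl (n + 1) x' ⊆ cyl n x ∩ {w : PathSpace d | ∃ n, N ≤ n ∧ w n = z} := by
          intro w hw
          refine ⟨fun k hk => ?_, n + 1, by omega, ?_⟩
          · have := hw k (by omega)
            simpa [hx', hk] using this
          · have := hw (n + 1) le_rfl
            simpa [hx'] using this
        refine le_trans ?_ (measure_mono hsub)
        rw [hcyl, hcyl, show x' 0 = x 0 by simp [hx']]
        split_ifs
        · rw [← lintegral_const_mul _ (measurable_pw n x)]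
          refine setLIntegral_mono' hA fun ω hω => ?_
          have hω' : δ ≤ (ω y).prob (z - y) := hω
          have e1 : pw n x' ω = pw n x ω := pw_congr (fun k hk => by simp [hx', hk]) ω
          rw [pw_succ, e1, mul_comm]
          have e2 : x' n = y := by simp [hx', hxy]
          have e3 : x' (n + 1) = z := by simp [hx']
          rw [e2, e3]
          exact mul_le_mul_right (ENNReal.ofReal_le_ofReal hω') _
        · simp)
    have h2 := ae_of_ae_map measurable_snd.aemeasurable hL
    rw [ae_restrict_iff' hAm] at h2
    filter_upwards [h2] with q hq hd hf
    exact hq hd ((hf.and_eventually (eventually_ge_atTop N)).mono fun n h => ⟨h.2, h.1⟩)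
  have key' : ∀ᵐ q ∂P, ∀ (y z : Site d) (j N : ℕ), ((1 : ℝ) / (j + 1)) ≤ (q.1 y).prob (z - y) →
      (∃ᶠ n in atTop, q.2 n = y) → ∃ n, N ≤ n ∧ q.2 n = z := by
    simp only [ae_all_iff]
    exact key
  filter_upwards [key'] with q hq y z hyz hf
  obtain ⟨j, hj⟩ := exists_nat_one_div_lt hyz
  exact frequently_atTop.2 fun N => hq y z j N hj.le hf

/-- If the walk goes up with positive probability then some step of positive height has positive
annealed probability. -/
lemma IsRWRE.exists_up_step (hP : IsRWRE μ P) (l : Fin d → ℝ)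
    (h : P (Prod.snd ⁻¹' goesUp l) ≠ 0) :
    ∃ e : Site d, 0 < dotR e l ∧
      ∫⁻ ω, ENNReal.ofReal ((ω 0).prob e) ∂(P.map Prod.fst) ≠ 0 := by
  by_contra hcon
  push Not at hcon
  have hz : ∀ᵐ ω ∂(P.map Prod.fst), ∀ e : Site d, 0 < dotR e l → ∀ z : Site d,
      (ω z).prob e ≤ 0 := by
    refine ae_all_iff.2 fun e => ?_
    by_cases he : 0 < dotR e l
    swap
    · exact ae_of_all _ fun ω h => absurd h he
    have : ∀ᵐ ω ∂(P.map Prod.fst), ∀ z : Site d, (ω z).prob e ≤ 0 := by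
      refine ae_all_iff.2 fun z => ?_
      have hm : Measurable fun ω : EnvOmega d => ENNReal.ofReal ((ω 0).prob e) :=
        ENNReal.measurable_ofReal.comp ((measurable_prob _).comp (measurable_pi_apply 0))
      have h1 := hcon e he
      rw [← hP.lintegral_shift z hm] at h1
      filter_upwards [(lintegral_eq_zero_iff (hm.comp (measurable_shiftEnv z))).1 h1] with ω hω
      have : ENNReal.ofReal ((ω (0 + z)).prob e) = 0 := hω
      rw [zero_add] at this
      exact ENNReal.ofReal_eq_zero.1 this
    filter_upwards [this] with ω hω _
    exact hω
  apply h
  have h2 := ae_of_ae_map measurable_fst.aemeasurable hz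
  refine measure_eq_zero_iff_ae_notMem.2 ?_
  filter_upwards [h2, hP.steps_pos] with q hq hs hup
  have hbd : ∀ n, dotR (q.2 n) l ≤ dotR (q.2 0) l := by
    intro n
    induction n with
    | zero => exact le_rfl
    | succ n ih =>
      have : ¬ 0 < dotR (q.2 (n + 1) - q.2 n) l := fun hp => absurd (hq _ hp (q.2 n)) (not_le.2 (hs n))
      rw [dotR_sub] at this
      linarith
  have hup' : Tendsto (fun n => dotR (q.2 n) l) atTop atTop := hup
  obtain ⟨n, hn⟩ := (hup'.eventually (eventually_gt_atTop (dotR (q.2 0) l))).exists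
  exact absurd hn (not_lt.2 (hbd n))
end law

/-! ### Connected clusters and mass transport -/

/-- Reachability in exactly `n` steps. -/
def reachN {d : ℕ} (ω : EnvOmega d) : ℕ → Site d → Site d → Prop
  | 0, a, b => a = b
  | n + 1, a, b => ∃ c, reachN ω n a c ∧ 0 < (ω c).prob (b - c)

lemma reaches_iff {d : ℕ} (ω : EnvOmega d) (a b : Site d) :
    Reaches ω a b ↔ ∃ n, reachN ω n a b := by
  constructor
  · intro h
    induction h with
    | refl => exact ⟨0, rfl⟩
    | tail _ hbc ih => exact ⟨ih.choose + 1, _, ih.choose_spec, hbc⟩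
  · rintro ⟨n, h⟩
    induction n generalizing b with
    | zero => rw [show a = b from h]; exact Relation.ReflTransGen.refl
    | succ n ih =>
      obtain ⟨c, h1, h2⟩ := h
      exact (ih c h1).tail h2

lemma measurable_reaches {d : ℕ} (a b : Site d) :
    Measurable fun ω : EnvOmega d => Reaches ω a b := by
  simp only [reaches_iff]
  refine Measurable.exists fun n => ?_
  induction n generalizing b with
  | zero => exact measurable_const
  | succ n ih =>
    refine Measurable.exists fun c => (ih c).and ?_
    exact measurableSet_setOfPred.1
      (measurableSet_lt measurable_const ((measurable_prob _).comp (measurable_pi_apply c)))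

lemma Reaches.of_shift {d : ℕ} {z : Site d} {ω : EnvOmega d} {a b : Site d}
    (h : Reaches (shiftEnv z ω) a b) : Reaches ω (a + z) (b + z) :=
  Relation.ReflTransGen.lift (fun x => x + z) (fun x y hxy => by
    simpa [shiftEnv, Function.onFun] using hxy) _ _ h

lemma reaches_shift {d : ℕ} (z : Site d) (ω : EnvOmega d) (a b : Site d) :
    Reaches (shiftEnv z ω) a b ↔ Reaches ω (a + z) (b + z) := by
  refine ⟨Reaches.of_shift, fun h => ?_⟩
  rw [← shiftEnv_neg z ω] at h
  simpa using h.of_shift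

lemma clusterM_eq {d : ℕ} {ω : EnvOmega d} {x y : Site d} (h : y ∈ clusterM ω x) :
    clusterM ω y = clusterM ω x := by
  ext z
  exact ⟨fun hz => ⟨h.1.trans hz.1, hz.2.trans h.2⟩, fun hz => ⟨h.2.trans hz.1, hz.2.trans h.1⟩⟩

lemma mem_clusterM_shift {d : ℕ} (z : Site d) (ω : EnvOmega d) (x y : Site d) :
    y ∈ clusterM (shiftEnv z ω) x ↔ y + z ∈ clusterM ω (x + z) := by
  simp only [clusterM, mem_ofPred_eq, reaches_shift]

/-- The highest sites, in direction `ℓ`, of the cluster `M_x`. -/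
def topSet {d : ℕ} (l : Fin d → ℝ) (ω : EnvOmega d) (x : Site d) : Set (Site d) :=
  {y | y ∈ clusterM ω x ∧ ∀ z, z ∈ clusterM ω x → dotR z l ≤ dotR y l}

lemma topSet_eq {d : ℕ} {l : Fin d → ℝ} {ω : EnvOmega d} {x y : Site d} (h : y ∈ clusterM ω x) :
    topSet l ω y = topSet l ω x := by
  simp only [topSet, clusterM_eq h]

lemma mem_topSet_shift {d : ℕ} (l : Fin d → ℝ) (z : Site d) (ω : EnvOmega d) (x y : Site d) :
    y ∈ topSet l (shiftEnv z ω) x ↔ y + z ∈ topSet l ω (x + z) := by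
  simp only [topSet, mem_ofPred_eq, mem_clusterM_shift]
  refine and_congr_right fun _ => ⟨fun h w hw => ?_, fun h w hw => ?_⟩
  · have := h (w - z) (by simpa using hw)
    rw [dotR_sub] at this
    rw [dotR_add]
    linarith
  · have := h (w + z) hw
    rw [dotR_add, dotR_add] at this
    linarith

lemma measurable_mem_clusterM {d : ℕ} (x y : Site d) :
    Measurable fun ω : EnvOmega d => y ∈ clusterM ω x :=
  (measurable_reaches x y).and (measurable_reaches y x)

lemma measurable_mem_topSet {d : ℕ} (l : Fin d → ℝ) (x y : Site d) :
    Measurable fun ω : EnvOmega d => y ∈ topSet l ω x :=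
  (measurable_mem_clusterM x y).and
    (Measurable.forall fun z => (measurable_mem_clusterM x z).imp measurable_const)

/-- The number of elements of a set of sites, as an extended nonnegative real. -/
noncomputable def siteCard {d : ℕ} (S : Set (Site d)) : ℝ≥0∞ := ∑' y, if y ∈ S then 1 else 0

lemma siteCard_eq {d : ℕ} (S : Set (Site d)) : siteCard S = (S.encard : ℝ≥0∞) := by
  rw [← ENNReal.tsum_set_one, tsum_subtype S fun _ => (1 : ℝ≥0∞)]
  exact tsum_congr fun y => by simp [indicator]

lemma siteCard_eq_top {d : ℕ} {S : Set (Site d)} : siteCard S = ⊤ ↔ S.Infinite := by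
  rw [siteCard_eq, ENat.toENNReal_eq_top, encard_eq_top_iff]

lemma siteCard_shift {d : ℕ} {S T : Set (Site d)} (z : Site d) (h : ∀ y, y ∈ S ↔ y + z ∈ T) :
    siteCard S = siteCard T := by
  unfold siteCard
  simp only [h]
  exact (Equiv.addRight z).tsum_eq fun y => if y ∈ T then (1 : ℝ≥0∞) else 0

lemma measurable_siteCard {d : ℕ} {S : EnvOmega d → Set (Site d)}
    (h : ∀ y, Measurable fun ω => y ∈ S ω) : Measurable fun ω => siteCard (S ω) :=
  Measurable.tsum fun y =>
    Measurable.ite (measurableSet_setOfPred.2 (h y)) measurable_const measurable_const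

section law
variable {d : ℕ} {μ : Measure (EnvDist d)} {P : Measure (RWSpace d)}

/-- The mass transport principle: a shift-covariant flow of mass out of the origin has the same
expected total as the flow into the origin. -/
lemma IsRWRE.mass_transport (hP : IsRWRE μ P) (F : EnvOmega d → Site d → Site d → ℝ≥0∞)
    (hF : ∀ x y, Measurable fun ω => F ω x y)
    (hinv : ∀ z ω x y, F (shiftEnv z ω) x y = F ω (x + z) (y + z)) :
    ∫⁻ ω, ∑' y, F ω 0 y ∂(P.map Prod.fst) = ∫⁻ ω, ∑' y, F ω y 0 ∂(P.map Prod.fst) := by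
  rw [lintegral_tsum fun y => (hF 0 y).aemeasurable, lintegral_tsum fun y => (hF y 0).aemeasurable,
    ← (Equiv.neg (Site d)).tsum_eq]
  refine tsum_congr fun y => ?_
  rw [← hP.lintegral_shift y (hF 0 (Equiv.neg (Site d) y))]
  refine lintegral_congr fun ω => ?_
  rw [hinv]
  simp

/-- Each site of `M_x` sends unit mass, split equally, to the highest sites of `M_x`; if these were
finitely many and `M_x` infinite, each of them would receive infinite mass. -/
lemma IsRWRE.no_finite_top (hP : IsRWRE μ P) (l : Fin d → ℝ) :
    ∀ᵐ ω ∂(P.map Prod.fst), ∀ x, x ∈ topSet l ω x → (clusterM ω x).Infinite →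
      (topSet l ω x).Infinite := by
  have := hP.2.1.2.1
  have h0 : ∀ᵐ ω ∂(P.map Prod.fst), 0 ∈ topSet l ω 0 → (clusterM ω 0).Infinite →
      (topSet l ω 0).Infinite := by
    set F : EnvOmega d → Site d → Site d → ℝ≥0∞ := fun ω x y =>
      if y ∈ topSet l ω x then (siteCard (topSet l ω x))⁻¹ else 0 with hFdef
    have hF : ∀ x y, Measurable fun ω => F ω x y := fun x y =>
      Measurable.ite (measurableSet_setOfPred.2 (measurable_mem_topSet l x y))
        (measurable_siteCard fun z => measurable_mem_topSet l x z).inv measurable_const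
    have hinv : ∀ z ω x y, F (shiftEnv z ω) x y = F ω (x + z) (y + z) := by
      intro z ω x y
      simp only [hFdef, mem_topSet_shift,
        siteCard_shift z fun y => mem_topSet_shift l z ω x y]
    have hout : ∀ ω, ∑' y, F ω 0 y ≤ 1 := by
      intro ω
      have : ∑' y, F ω 0 y = siteCard (topSet l ω 0) * (siteCard (topSet l ω 0))⁻¹ := by
        conv_rhs => rw [siteCard, ← ENNReal.tsum_mul_right]
        refine tsum_congr fun y => ?_
        simp only [hFdef, ite_mul, one_mul, zero_mul]
        rfl
      rw [this]
      exact ENNReal.mul_inv_le_one _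
    have hin : ∫⁻ ω, ∑' y, F ω y 0 ∂(P.map Prod.fst) ≠ ⊤ := by
      rw [← hP.mass_transport F hF hinv]
      refine ne_top_of_le_ne_top ENNReal.one_ne_top ((lintegral_mono hout).trans ?_)
      simp
    filter_upwards [ae_lt_top (Measurable.tsum fun y => hF y 0) hin] with ω hω htop hM hfin
    refine hω.ne (top_unique ?_)
    have hinf : siteCard (clusterM ω 0) * (siteCard (topSet l ω 0))⁻¹ = ⊤ := by
      rw [siteCard_eq_top.2 hM]
      exact ENNReal.top_mul (ENNReal.inv_ne_zero.2 fun h => siteCard_eq_top.1 h hfin)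
    rw [← hinf, siteCard, ← ENNReal.tsum_mul_right]
    refine ENNReal.tsum_le_tsum fun y => ?_
    split_ifs with hy
    · simp [hFdef, topSet_eq hy, htop]
    · simp
  refine ae_all_iff.2 fun x => ?_
  rw [← hP.map_shift x] at h0
  filter_upwards [ae_of_ae_map (measurable_shiftEnv x).aemeasurable h0] with ω h hx hM
  rw [mem_topSet_shift, zero_add, ← siteCard_eq_top, ← siteCard_eq_top,
    siteCard_shift x fun y => mem_topSet_shift l x ω 0 y,
    siteCard_shift x fun y => mem_clusterM_shift x ω 0 y, zero_add, siteCard_eq_top,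
    siteCard_eq_top] at h
  exact h hx hM

/-- If the forward cluster of the origin is almost surely infinite then so are all the others. -/
lemma IsRWRE.clusterC_infinite (hP : IsRWRE μ P)
    (h : (P.map Prod.fst) {ω : EnvOmega d | (clusterC ω 0).Infinite} = 1) :
    ∀ᵐ ω ∂(P.map Prod.fst), ∀ y, (clusterC ω y).Infinite := by
  have := hP.2.1.2.1
  have hm : MeasurableSet {ω : EnvOmega d | (clusterC ω 0).Infinite} := by
    simp only [← siteCard_eq_top]
    exact measurable_siteCard (fun y => measurable_reaches 0 y) (measurableSet_singleton ⊤)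
  have h0 : ∀ᵐ ω ∂(P.map Prod.fst), (clusterC ω 0).Infinite :=
    (mem_ae_iff_prob_eq_one hm).2 h
  refine ae_all_iff.2 fun x => ?_
  rw [← hP.map_shift x] at h0
  filter_upwards [ae_of_ae_map (measurable_shiftEnv x).aemeasurable h0] with ω h
  rw [← siteCard_eq_top, siteCard_shift x (T := clusterC ω x) fun y => ?_, siteCard_eq_top] at h
  · exact h
  · simp only [clusterC, mem_ofPred_eq, reaches_shift, zero_add]
end law

/-! ### Either transient upwards or transient downwards -/

/-- A path of bounded height that visits infinitely many sites of height at least `u` infinitely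
often starts, from height at least `u`, a half-line in direction `e` with no visited site on it: it
does so at the first time it meets, above height `u`, a given line in direction `e`. -/
lemma frequently_fresh {d : ℕ} {l : Fin d → ℝ} {e : Site d} (he : 0 < dotR e l) {u v : ℝ}
    (w : PathSpace d) (hv : ∀ n, dotR (w n) l ≤ v)
    (hinf : {y | ∃ n, w n = y ∧ u ≤ dotR y l}.Infinite) :
    ∃ᶠ n in atTop, u ≤ dotR (w n) l ∧ ∀ m < n, ∀ i : ℕ, w m ≠ w n + i • e := by
  refine frequently_atTop.2 fun N => ?_
  obtain ⟨K, hK⟩ := exists_nat_gt ((v - u) / dotR e l)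
  have hK' : v - u < K * dotR e l := (div_lt_iff₀ he).1 hK
  -- the line through a visited site `y ∉ B` is not met above height `u` before time `N`
  set B : Set (Site d) := image2 (fun (k : ℕ) (j : ℤ) => w k + j • e) (Iic N) (Icc (-(K : ℤ)) K)
  have hB : B.Finite := (finite_Iic N).image2 _ (finite_Icc _ _)
  obtain ⟨y, ⟨n₀, hn₀, hy⟩, hyB⟩ := (hinf.sdiff hB).nonempty
  have hex : ∃ n, u ≤ dotR (w n) l ∧ ∃ j : ℤ, w n = y + j • e :=
    ⟨n₀, by rwa [hn₀], 0, by simp [hn₀]⟩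
  obtain ⟨hu, j, hj⟩ := Nat.find_spec hex
  have hmin := fun m => Nat.find_min hex (m := m)
  set n := Nat.find hex
  have hyv : dotR y l ≤ v := hn₀ ▸ hv n₀
  have hnv := hv n
  have hh : dotR (w n) l = dotR y l + j * dotR e l := by rw [hj, dotR_add, dotR_zsmul]
  refine ⟨n, ?_, hu, fun m hm i hi => hmin m hm ⟨?_, i + j, ?_⟩⟩
  · by_contra hlt
    refine hyB ⟨n, (not_le.1 hlt).le, -j, ⟨?_, ?_⟩, by simp [hj]⟩
    · have : (j : ℝ) < K := lt_of_mul_lt_mul_right (a := dotR e l) (by linarith) he.le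
      have : j < (K : ℤ) := by exact_mod_cast this
      omega
    · have : (-j : ℝ) < K := lt_of_mul_lt_mul_right (a := dotR e l) (by linarith) he.le
      have : -j < (K : ℤ) := by exact_mod_cast this
      omega
  · rw [hi, dotR_add, dotR_nsmul]
    have : 0 ≤ (i : ℝ) * dotR e l := by positivity
    linarith
  · rw [hi, hj, add_smul, natCast_zsmul]
    abel

section law
variable {d : ℕ} {μ : Measure (EnvDist d)} {P : Measure (RWSpace d)}

/-- A walk that neither goes up nor goes down visits some site infinitely often while staying below
some height; its mutually connected cluster is then infinite with finitely many highest sites, which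
mass transport forbids. -/
lemma IsRWRE.up_or_down (hP : IsRWRE μ P) (l : Fin d → ℝ) (h : P (Prod.snd ⁻¹' goesUp l) ≠ 0)
    (hθ : (P.map Prod.fst) {ω : EnvOmega d | (clusterC ω 0).Infinite} = 1) :
    ∀ᵐ q ∂P, q.2 ∈ goesUp l ∨ Tendsto (fun n => dotR (q.2 n) l) atTop atBot := by
  obtain ⟨e, he, hα⟩ := hP.exists_up_step l h
  have hfresh : ∀ᵐ q ∂P, ∀ u v : ℤ, (∃ᶠ n in atTop, (u : ℝ) ≤ dotR (q.2 n) l ∧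
      ∀ m < n, ∀ i : ℕ, q.2 m ≠ q.2 n + i • e) → ∃ n, (v : ℝ) < dotR (q.2 n) l :=
    ae_all_iff.2 fun u => ae_all_iff.2 fun v => hP.exceeds_of_fresh he hα u v
  filter_upwards [hP.goesUp_of_unbounded l h, hfresh, hP.steps_pos, hP.recurrent_step,
    ae_of_ae_map measurable_fst.aemeasurable (hP.no_finite_top l),
    ae_of_ae_map measurable_fst.aemeasurable (hP.clusterC_infinite hθ)]
    with q hunb hfr hsteps hrec htop hinf
  by_contra hcon
  push Not at hcon
  obtain ⟨hup, hdown⟩ := hcon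
  obtain ⟨C, hC⟩ : ∃ C : ℝ, ∀ n, dotR (q.2 n) l ≤ C := by
    by_contra hne
    push Not at hne
    exact hup (hunb hne)
  have hfin : ∀ u : ℤ, {y | ∃ n, q.2 n = y ∧ (u : ℝ) ≤ dotR y l}.Finite := by
    intro u
    by_contra hne
    obtain ⟨n, hn⟩ := hfr u ⌈C⌉ (frequently_fresh he q.2 hC hne)
    exact absurd hn (not_lt.2 ((hC n).trans (Int.le_ceil C)))
  obtain ⟨y, hy⟩ : ∃ y, ∃ᶠ n in atTop, q.2 n = y := by
    obtain ⟨b, hb⟩ : ∃ b : ℝ, ∃ᶠ n in atTop, b < dotR (q.2 n) l := by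
      by_contra hne
      push Not at hne
      exact hdown (tendsto_atBot.2 fun b => (hne b).mono fun n hn => hn)
    by_contra hne
    push Not at hne
    have hev := (eventually_all_finite (hfin ⌊b⌋)).2 fun z _ => hne z
    obtain ⟨n, hn, hn'⟩ := (hb.and_eventually hev).exists
    exact hn' (q.2 n) ⟨n, rfl, (Int.floor_le b).trans hn.le⟩ rfl
  have hreach : ∀ n m, n ≤ m → Reaches q.1 (q.2 n) (q.2 m) := by
    intro n m hnm
    induction m, hnm using Nat.le_induction with
    | base => exact Relation.ReflTransGen.refl
    | succ m _ ih => exact ih.tail (hsteps m)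
  have hvis : ∀ z, Reaches q.1 y z → ∃ᶠ n in atTop, q.2 n = z := by
    intro z hz
    induction hz with
    | refl => exact hy
    | tail _ hbc ih => exact hrec _ _ hbc ih
  -- every site reachable from `y` is visited and followed by a visit to `y`, so `C_y = M_y`
  have hMinf : (clusterM q.1 y).Infinite := by
    refine (hinf y).mono fun z hz => ⟨hz, ?_⟩
    obtain ⟨n, hn⟩ := (hvis z hz).exists
    obtain ⟨m, hnm, hm⟩ := frequently_atTop.1 hy n
    have := hreach n m hnm
    rwa [hn, hm] at this
  have hSfin : {z | z ∈ clusterM q.1 y ∧ dotR y l ≤ dotR z l}.Finite := by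
    refine (hfin ⌊dotR y l⌋).subset ?_
    rintro z ⟨hz, hyz⟩
    obtain ⟨n, hn⟩ := (hvis z hz.1).exists
    exact ⟨n, hn, (Int.floor_le _).trans hyz⟩
  have hyM : y ∈ clusterM q.1 y := ⟨Relation.ReflTransGen.refl, Relation.ReflTransGen.refl⟩
  obtain ⟨x, ⟨hxM, hyx⟩, hmax⟩ :=
    exists_max_image _ (fun z => dotR z l) hSfin ⟨y, hyM, le_rfl⟩
  have hx : x ∈ topSet l q.1 y := by
    refine ⟨hxM, fun z hz => ?_⟩
    rcases le_total (dotR y l) (dotR z l) with h1 | h1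
    · exact hmax z ⟨hz, h1⟩
    · exact h1.trans hyx
  have h1 := htop x
  rw [topSet_eq hxM, clusterM_eq hxM] at h1
  exact h1 hx hMinf (hSfin.subset fun z hz => ⟨hz.1, hz.2 y hyM⟩)
end law

/-- if `P(A₊(ℓ)) > 0` then `P(A₊(ℓ) ∩ {X_n·ℓ ≥ 0 ∀n}) > 0`; if in
addition `θ₊ = 1` and (★) hold, then `P((A₊ ∪ A₋)ᶜ) = 0`. -/
theorem stmt11 {d : ℕ} (hd : 2 ≤ d) (μ : Measure (EnvDist d))
    (P : Measure (RWSpace d)) (hP : IsRWRE μ P) (l : Fin d → ℝ) (hl : l ≠ 0) :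
    ((0 < P {q : RWSpace d | Tendsto (fun n => dotR (q.2 n) l) atTop atTop} →
        0 < P {q : RWSpace d | Tendsto (fun n => dotR (q.2 n) l) atTop atTop ∧
            ∀ n : ℕ, 0 ≤ dotR (q.2 n) l}) ∧
     (0 < P {q : RWSpace d | Tendsto (fun n => dotR (q.2 n) l) atTop atTop} →
        (P.map Prod.fst) {ω : EnvOmega d | (clusterC ω 0).Infinite} = 1 →
        (∀ i : Fin d, 0 < μ {γ : EnvDist d | 0 < γ.prob (stepVec d (i, true))}) →
        P {q : RWSpace d | ¬ (Tendsto (fun n => dotR (q.2 n) l) atTop atTop ∨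
            Tendsto (fun n => dotR (q.2 n) l) atTop atBot)} = 0)) := by
  exact ⟨fun h => pos_iff_ne_zero.2 (hP.stay_pos l h.ne'),
    fun h hθ _ => ae_iff.1 (hP.up_or_down l h.ne' hθ)⟩
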